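/- Let M be a finite von Neumann algebra with center-valued trace T. If p_α, p are projections with T(p_α) → T(p) strongly, then [p_α] → [p] in the quotient topology on P(M)/∼; conversely if [p_α] → [p] then T(p_α) → T(p) strongly. Hence T induces a homeomorphism of (P(M)/∼, QOT) onto a subspace of the positive unit ball of Z(M) with the strong topology. -/

import Mathlib

open ContinuousLinearMap Filter Topology

universe u

noncomputable section

variable {H : Type u} [NormedAddCommGroup H] [InnerProductSpace ℂ H] [CompleteSpace H]

/-- `p` is an (orthogonal) projection belonging to the von Neumann algebra `M`. -/
def IsProjIn (M : VonNeumannAlgebra H) (p : H →L[ℂ] H) : Prop :=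
  p ∈ M ∧ IsSelfAdjoint p ∧ p * p = p

/-- Murray–von Neumann equivalence of `p` and `q` relative to `M`:
there is a partial isometry `v ∈ M` with `v* v = p` and `v v* = q`. -/
def MvNEquiv (M : VonNeumannAlgebra H) (p q : H →L[ℂ] H) : Prop :=
  ∃ v ∈ M, adjoint v * v = p ∧ v * adjoint v = q

/-- The order on projections: `p ≤ q` iff `p q = p = q p`. -/
def ProjLE (p q : H →L[ℂ] H) : Prop := p * q = p ∧ q * p = p

/-- Murray–von Neumann subequivalence `p ≼ q`: `p` is equivalent to a subprojection of `q`. -/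
def SubEquiv (M : VonNeumannAlgebra H) (p q : H →L[ℂ] H) : Prop :=
  ∃ r, IsProjIn M r ∧ MvNEquiv M p r ∧ ProjLE r q

/-- `z` is a central projection of `M`. -/
def IsCentralProj (M : VonNeumannAlgebra H) (z : H →L[ℂ] H) : Prop :=
  IsProjIn M z ∧ ∀ x ∈ M, z * x = x * z

/-- A projection `p` is finite: `p ∼ q ≤ p` implies `q = p`. -/
def FiniteProj (M : VonNeumannAlgebra H) (p : H →L[ℂ] H) : Prop :=
  ∀ q, IsProjIn M q → ProjLE q p → MvNEquiv M p q → q = p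

/-- A projection `p` is properly infinite: it is a countably infinite sum of pairwise
orthogonal projections, each equivalent to `p`. -/
def ProperlyInfiniteProj (M : VonNeumannAlgebra H) (p : H →L[ℂ] H) : Prop :=
  p ≠ 0 ∧ ∃ e : ℕ → H →L[ℂ] H, (∀ n, IsProjIn M (e n)) ∧
    (Pairwise fun m n => e m * e n = 0) ∧ (∀ n, MvNEquiv M (e n) p) ∧
    ∀ ξ : H, HasSum (fun n => e n ξ) (p ξ)

/-- `z` is the central support of `h`: the smallest central projection with `z h = h`. -/
def IsCentralSupport (M : VonNeumannAlgebra H) (h z : H →L[ℂ] H) : Prop :=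
  IsCentralProj M z ∧ z * h = h ∧ ∀ w, IsCentralProj M w → w * h = h → z * w = z

/-- The projection `e` is σ-finite relative to `M`: every family of pairwise orthogonal
nonzero subprojections of `e` in `M` is countable. -/
def SigmaFiniteProj (M : VonNeumannAlgebra H) (e : H →L[ℂ] H) : Prop :=
  ∀ S : Set (H →L[ℂ] H), (∀ q ∈ S, IsProjIn M q ∧ q ≠ 0 ∧ ProjLE q e) →
    (S.Pairwise fun a b => a * b = 0) → S.Countable

/-- Kadison–Pedersen equivalence on the positive cone: `h ≈ k` iff there is a family
`{x_α} ⊆ M` with `h = Σ x_α* x_α` and `k = Σ x_α x_α*` (sums in the strong topology). -/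
def KPEquiv (M : VonNeumannAlgebra H) (h k : H →L[ℂ] H) : Prop :=
  ∃ (ι : Type u) (x : ι → H →L[ℂ] H), (∀ i, x i ∈ M) ∧
    (∀ ξ : H, HasSum (fun i => (adjoint (x i) * x i) ξ) (h ξ)) ∧
    (∀ ξ : H, HasSum (fun i => (x i * adjoint (x i)) ξ) (k ξ))

/-- Operator order: `a ≤ b` iff `b - a` is positive. -/
def OpLE (a b : H →L[ℂ] H) : Prop := (b - a).IsPositive

/-- `h ∈ M₊` is finite in the Kadison–Pedersen sense: `h ≈ k ≤ h` implies `k = h`. -/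
def KPFinite (M : VonNeumannAlgebra H) (h : H →L[ℂ] H) : Prop :=
  ∀ k, k ∈ M → k.IsPositive → OpLE k h → KPEquiv M h k → k = h

/-- `h ∈ M₊` is properly infinite: `z h` is finite and nonzero for no central projection `z`. -/
def KPProperlyInfinite (M : VonNeumannAlgebra H) (h : H →L[ℂ] H) : Prop :=
  h ≠ 0 ∧ ∀ z, IsCentralProj M z → KPFinite M (z * h) → z * h = 0

/-- The set of projections of `M`. -/
def ProjSet (M : VonNeumannAlgebra H) := {p : H →L[ℂ] H // IsProjIn M p}

/-- The strong operator topology on the projections of `M` (topology of pointwise convergence). -/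
instance (M : VonNeumannAlgebra H) : TopologicalSpace (ProjSet M) :=
  TopologicalSpace.induced (fun p : ProjSet M => (fun ξ => p.1 ξ : H → H)) inferInstance

/-- The quotient `P(M)/∼` of the projections of `M` by Murray–von Neumann equivalence,
carrying the quotient (strong operator) topology. -/
abbrev PQuot (M : VonNeumannAlgebra H) :=
  Quot (fun p q : ProjSet M => MvNEquiv M p.1 q.1)

/-- The quotient map `P(M) → P(M)/∼`. -/
def pquotMk (M : VonNeumannAlgebra H) : ProjSet M → PQuot M := Quot.mk _

/-- The strong operator topology on `B(H)`. -/
def SOT : TopologicalSpace (H →L[ℂ] H) :=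
  TopologicalSpace.induced (fun a : H →L[ℂ] H => (fun ξ => a ξ : H → H)) inferInstance

/-- The order induced on `P(M)/∼` by Murray–von Neumann subequivalence. -/
def QLE (M : VonNeumannAlgebra H) (a b : PQuot M) : Prop :=
  ∃ p q : ProjSet M, a = pquotMk M p ∧ b = pquotMk M q ∧ SubEquiv M p.1 q.1

/-!
By weak operator compactness the unit ball of `q M p` has an extreme point `x`. It is a partial
isometry with `(q - x x*) M (p - x* x) = 0`, and a central projection separating the two remainders
gives comparison of projections. Since `T` is faithful, `T p = T q` then forces `p ∼ q`, so partial
isometries extend to unitaries of `M`. Conjugating by such a unitary replaces `q` by some `r ∼ q`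
with `p = e + d` and `r = e + d'`, where a central projection `z` satisfies `z d = d` and
`z d' = 0`. Hence `(r - p)² = d + d'` and `T ((r - p)²) = (2 z - 1) (T p - T q)`, and `2 z - 1` is
unitary: if `T q` is strongly close to `T p`, then `T ((r - p)²)` is strongly close to `0`.

It remains to see that positive contractions `s` with `T s → 0` strongly tend weakly to `0`. A weak
cluster point of them is a strong limit of convex combinations (Mazur), so its trace vanishes by
strong continuity of `T` on bounded sets, and it is `0` by faithfulness.
-/

section WeakOperatorTopology

variable {𝕜 E F : Type*} [RCLike 𝕜] [NormedAddCommGroup E] [NormedSpace 𝕜 E]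
  [NormedAddCommGroup F] [InnerProductSpace 𝕜 F] [CompleteSpace F]

theorem exists_tendsto_inner_of_ultrafilter {ι : Type*} {l : Ultrafilter ι} {v : ι → F} {R : ℝ}
    (hv : ∀ᶠ i in l, ‖v i‖ ≤ R) :
    ∃ w : F, ‖w‖ ≤ R ∧ ∀ y, Tendsto (fun i => inner 𝕜 y (v i)) l (𝓝 (inner 𝕜 y w)) := by
  let φ : ι → WeakDual 𝕜 F := fun i => StrongDual.toWeakDual (InnerProductSpace.toDual 𝕜 F (v i))
  have hφ : (l.map φ : Filter (WeakDual 𝕜 F)) ≤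
      𝓟 (WeakDual.toStrongDual ⁻¹' Metric.closedBall (0 : StrongDual 𝕜 F) R) := by
    rw [Ultrafilter.coe_map, le_principal_iff, mem_map]
    filter_upwards [hv] with i hi
    simpa [φ] using hi
  obtain ⟨ψ, hψR, hψ⟩ := (WeakDual.isCompact_closedBall 0 R).ultrafilter_le_nhds _ hφ
  obtain ⟨w, hw⟩ := (InnerProductSpace.toDual 𝕜 F).surjective (WeakDual.toStrongDual ψ)
  refine ⟨w, by simpa [← hw] using hψR, fun y => ?_⟩
  have hlim : Tendsto (fun i => φ i y) l (𝓝 (ψ y)) :=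
    ((WeakDual.eval_continuous y).tendsto ψ).comp hψ
  have hψy : ψ y = inner 𝕜 w y := congr($hw.symm y)
  have hlim' : Tendsto (fun i => inner 𝕜 (v i) y) l (𝓝 (inner 𝕜 w y)) := hψy ▸ hlim
  simpa using hlim'.star

theorem isCompact_setOf_norm_toCLM_le (R : ℝ) :
    IsCompact {A : E →WOT[𝕜] F | ‖A.toCLM‖ ≤ R} := by
  refine isCompact_iff_ultrafilter_le_nhds.2 fun l hl => ?_
  have hlR : ∀ᶠ A : E →WOT[𝕜] F in l, ‖A.toCLM‖ ≤ R := le_principal_iff.1 hl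
  have hbdd (x : E) : ∀ᶠ A : E →WOT[𝕜] F in l, ‖A x‖ ≤ R * ‖x‖ :=
    hlR.mono fun A hA => A.toCLM.le_of_opNorm_le hA x
  choose f hfR hf using fun x => exists_tendsto_inner_of_ultrafilter (𝕜 := 𝕜) (hbdd x)
  let L : E →ₗ[𝕜] F :=
    { toFun := f
      map_add' x y := ext_inner_left 𝕜 fun z => tendsto_nhds_unique (hf (x + y) z) <| by
        simpa [inner_add_right] using (hf x z).add (hf y z)
      map_smul' c x := ext_inner_left 𝕜 fun z => tendsto_nhds_unique (hf (c • x) z) <| by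
        simpa [inner_smul_right] using (hf x z).const_mul c }
  obtain ⟨A, hA⟩ := hlR.exists
  refine ⟨.ofCLM (L.mkContinuous R hfR),
    L.mkContinuous_norm_le ((norm_nonneg _).trans hA) hfR, ?_⟩
  exact ContinuousLinearMapWOT.le_nhds_iff_forall_inner_apply_le_nhds.2 hf

theorem isClosed_setOf_toCLM_isPositive {𝕜 E : Type*} [RCLike 𝕜] [NormedAddCommGroup E]
    [InnerProductSpace 𝕜 E] : IsClosed {A : E →WOT[𝕜] E | A.toCLM.IsPositive} := by
  have hright (x y : E) : Continuous fun A : E →WOT[𝕜] E => inner 𝕜 x (A y) :=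
    ContinuousLinearMapWOT.continuous_dual_apply y (innerSL 𝕜 x)
  have hleft (x y : E) : Continuous fun A : E →WOT[𝕜] E => inner 𝕜 (A x) y := by
    simpa using (hright y x).star
  simp only [isPositive_def, LinearMap.IsSymmetric, Set.ofPred_and, Set.ofPred_forall]
  exact (isClosed_iInter fun x => isClosed_iInter fun y =>
    isClosed_eq (hleft x y) (hright x y)).inter (isClosed_iInter fun x =>
      isClosed_le continuous_const (RCLike.continuous_re.comp (hleft x x)))

theorem tendsto_apply_zero_of_inner_star_mul_self {𝕜 E ι : Type*} [RCLike 𝕜]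
    [NormedAddCommGroup E] [InnerProductSpace 𝕜 E] [CompleteSpace E] {l : Filter ι}
    {a : ι → E →L[𝕜] E} {x : E}
    (h : Tendsto (fun i => inner 𝕜 x ((star (a i) * a i) x)) l (𝓝 0)) :
    Tendsto (fun i => a i x) l (𝓝 0) := by
  have hsq : Tendsto (fun i => ‖a i x‖ ^ 2) l (𝓝 0) := by
    simpa [apply_norm_sq_eq_inner_adjoint_right, star_eq_adjoint, Function.comp_def] using
      (RCLike.continuous_re.tendsto _).comp h
  refine tendsto_zero_iff_norm_tendsto_zero.2 ?_
  simpa using hsq.sqrt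

end WeakOperatorTopology

section Mazur

section Pi

variable {𝕜 ι : Type*} [NontriviallyNormedField 𝕜] {E : ι → Type*} [∀ i, AddCommGroup (E i)]
  [∀ i, Module 𝕜 (E i)] [∀ i, TopologicalSpace (E i)]

theorem exists_finset_dual_pi_apply_eq_zero (f : StrongDual 𝕜 (∀ i, E i)) :
    ∃ s : Finset ι, ∀ x : ∀ i, E i, (∀ i ∈ s, x i = 0) → f x = 0 := by
  obtain ⟨s, u, hu, hsub⟩ := isOpen_pi_iff.1 (Metric.isOpen_ball.preimage f.continuous) 0
    (show (0 : ∀ i, E i) ∈ f ⁻¹' Metric.ball 0 1 by simp)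
  refine ⟨s, fun x hx => by_contra fun hfx => ?_⟩
  obtain ⟨c, hc⟩ := NormedField.exists_lt_norm 𝕜 ‖f x‖⁻¹
  have hmem : c • x ∈ f ⁻¹' Metric.ball 0 1 := hsub fun i hi => by
    simpa [hx i hi] using (hu i hi).2
  have hlt : ‖c‖ * ‖f x‖ < 1 := by simpa using hmem
  exact hlt.not_ge ((inv_le_iff_one_le_mul₀ (norm_pos_iff.2 hfx)).1 hc.le)

theorem exists_finset_dual_pi_apply_eq_sum_single [DecidableEq ι] (f : StrongDual 𝕜 (∀ i, E i)) :
    ∃ s : Finset ι, ∀ x : ∀ i, E i, f x = ∑ i ∈ s, f (Pi.single i (x i)) := by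
  obtain ⟨s, hs⟩ := exists_finset_dual_pi_apply_eq_zero f
  refine ⟨s, fun x => ?_⟩
  rw [← sub_eq_zero, ← map_sum, ← map_sub]
  refine hs _ fun i hi => ?_
  simp [Finset.sum_apply, hi]

end Pi

variable {𝕜 E F : Type*} [RCLike 𝕜] [NormedAddCommGroup E] [NormedSpace 𝕜 E]
  [NormedAddCommGroup F] [NormedSpace 𝕜 F] [NormedSpace ℝ F] [IsScalarTower ℝ 𝕜 F]

theorem coe_mem_closure_of_convex {C : Set (E →L[𝕜] F)} (hC : Convex ℝ C) {a : E →L[𝕜] F}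
    (ha : ContinuousLinearMapWOT.ofCLM a ∈ closure (ContinuousLinearMapWOT.ofCLM '' C)) :
    ⇑a ∈ closure ((fun b : E →L[𝕜] F => (b : E → F)) '' C) := by
  classical
  let e : (E →WOT[𝕜] F) →ₗ[𝕜] E → F := ⟨⟨fun b => b, fun _ _ => rfl⟩, fun _ _ => rfl⟩
  let toWOT := (ContinuousLinearMapWOT.linearEquiv (σ := RingHom.id 𝕜) (E := E) (F := F) ℝ).symm
  have hconv : Convex ℝ (ContinuousLinearMapWOT.ofCLM '' C : Set (E →WOT[𝕜] F)) :=
    hC.linear_image toWOT.toLinearMap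
  have hdual (f : StrongDual 𝕜 (E → F)) : Continuous (e.dualMap f) := by
    obtain ⟨s, hs⟩ := exists_finset_dual_pi_apply_eq_sum_single f
    have hsum : ⇑(e.dualMap f) =
        fun b => ∑ x ∈ s, (f ∘L ContinuousLinearMap.single 𝕜 (fun _ : E => F) x) (b x) := by
      ext b
      exact hs (e b)
    rw [hsum]
    exact continuous_finsetSum s fun x _ => ContinuousLinearMapWOT.continuous_dual_apply x _
  have hmem := e.image_closure_of_convex (𝕜 := 𝕜) hconv hdual ⟨_, ha, rfl⟩
  rwa [Set.image_image] at hmem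

end Mazur

section PartialIsometry

variable {R : Type*} [Semigroup R] [StarMul R] {x : R}

/-- Partial isometries, given by the equation `x x* x = x`, which is the one that extreme points of
the unit ball satisfy and which makes both `x* x` and `x x*` projections. -/
def IsPartialIsometry (x : R) : Prop :=
  x * star x * x = x

protected theorem IsPartialIsometry.star (hx : IsPartialIsometry x) :
    IsPartialIsometry (star x) := by
  simpa only [IsPartialIsometry, star_mul, star_star, mul_assoc] using congrArg Star.star hx

theorem IsPartialIsometry.isStarProjection_star_mul_self (hx : IsPartialIsometry x) :
    IsStarProjection (star x * x) where
  isIdempotentElem := by rw [IsIdempotentElem, mul_assoc, ← mul_assoc x, hx]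
  isSelfAdjoint := .star_mul_self x

theorem IsPartialIsometry.isStarProjection_mul_star_self (hx : IsPartialIsometry x) :
    IsStarProjection (x * star x) where
  isIdempotentElem := by rw [IsIdempotentElem, ← mul_assoc, hx]
  isSelfAdjoint := .mul_star_self x

end PartialIsometry

section ExtremePoints

theorem eq_zero_of_mem_extremePoints_of_add_mem_of_sub_mem {𝕜 E : Type*} [Field 𝕜] [LinearOrder 𝕜]
    [IsStrictOrderedRing 𝕜] [AddCommGroup E] [Module 𝕜 E] {s : Set E} {x d : E}
    (hx : x ∈ s.extremePoints 𝕜) (hadd : x + d ∈ s) (hsub : x - d ∈ s) : d = 0 := by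
  refine add_eq_left.1 (hx.2 hadd hsub ⟨2⁻¹, 2⁻¹, by positivity, by positivity, by norm_num, ?_⟩)
  rw [← smul_add, add_add_sub_cancel, ← two_smul 𝕜, smul_smul, inv_mul_cancel₀ two_ne_zero,
    one_smul]

variable {A : Type*} [CStarAlgebra A]

/-- The unit ball of the corner `q S p`, where `p` and `q` are meant to be projections of the
subalgebra `S`. -/
def cornerBall (S : StarSubalgebra ℂ A) (p q : A) : Set A :=
  {x | x ∈ S ∧ q * x = x ∧ x * p = x ∧ ‖x‖ ≤ 1}

variable {S : StarSubalgebra ℂ A} {p q x : A}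

theorem norm_le_one_iff_star_mul_self_le_one [PartialOrder A] [StarOrderedRing A] :
    ‖x‖ ≤ 1 ↔ star x * x ≤ 1 := by
  rw [← CStarAlgebra.norm_le_one_iff_of_nonneg _ (star_mul_self_nonneg x),
    CStarRing.norm_star_mul_self, ← sq, sq_le_one_iff₀ (norm_nonneg x)]

theorem norm_add_half_smul_le_one (hx : ‖x‖ ≤ 1) :
    ‖x + (2⁻¹ : ℝ) • (x - x * star x * x)‖ ≤ 1 := by
  let _ := CStarAlgebra.spectralOrder A
  have _ := CStarAlgebra.spectralOrderedRing A
  have hle : 0 ≤ 1 - star x * x := sub_nonneg.2 (norm_le_one_iff_star_mul_self_le_one.1 hx)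
  have hpos : 0 ≤ (1 - star x * x) * (3 + (1 - star x * x)) * (1 - star x * x) :=
    (IsSelfAdjoint.of_nonneg hle).conjugate_nonneg (add_nonneg (by norm_num) hle)
  rw [norm_le_one_iff_star_mul_self_le_one, ← sub_nonneg]
  -- With `t = x* x`, this is `1 - t (3 - t)² / 4 = (1 - t) (4 - t) (1 - t) / 4`.
  convert smul_nonneg (by norm_num : (0 : ℝ) ≤ 4⁻¹) hpos using 1
  have hcoe : (3 : A) = (3 : ℝ) • (1 : A) := by rw [Algebra.smul_def, map_ofNat, mul_one]
  simp only [hcoe, star_add, star_sub, star_mul, star_star, star_smul, star_trivial, mul_add,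
    mul_sub, mul_one, sub_mul, add_mul, one_mul, smul_add, smul_sub, mul_smul_comm,
    smul_mul_assoc, smul_smul, mul_assoc]
  module

theorem norm_sub_half_smul_le_one (hx : ‖x‖ ≤ 1) :
    ‖x - (2⁻¹ : ℝ) • (x - x * star x * x)‖ ≤ 1 := by
  have hx3 : ‖x * star x * x‖ ≤ 1 :=
    (norm_mul_le _ _).trans <| mul_le_one₀
      (CStarRing.norm_self_mul_star.trans_le (mul_le_one₀ hx (norm_nonneg x) hx)) (norm_nonneg x) hx
  calc ‖x - (2⁻¹ : ℝ) • (x - x * star x * x)‖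
      = ‖(2⁻¹ : ℝ) • (x + x * star x * x)‖ := by congr 1; module
    _ ≤ 2⁻¹ * (1 + 1) := by
        rw [norm_smul, Real.norm_of_nonneg (by norm_num)]
        gcongr
        exact (norm_add_le _ _).trans (add_le_add hx hx3)
    _ = 1 := by norm_num

theorem norm_add_le_one_of_orthogonal {a : A} (hx : IsPartialIsometry x) (ha : ‖a‖ ≤ 1)
    (hxa : star x * a = 0) (hax : a * star x = 0) : ‖x + a‖ ≤ 1 := by
  let _ := CStarAlgebra.spectralOrder A
  have _ := CStarAlgebra.spectralOrderedRing A
  have he := hx.isStarProjection_star_mul_self.one_sub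
  have hae : a * (1 - star x * x) = a := by
    rw [mul_sub, mul_one, ← mul_assoc, hax, zero_mul, sub_zero]
  have haa : star a * a ≤ 1 - star x * x := by
    calc star a * a = (1 - star x * x) * (star a * a) * (1 - star x * x) := by
          nth_rw 1 2 [← hae]
          simp only [star_mul, he.isSelfAdjoint.star_eq, mul_assoc]
      _ ≤ (1 - star x * x) * 1 * (1 - star x * x) :=
          he.isSelfAdjoint.conjugate_le_conjugate (norm_le_one_iff_star_mul_self_le_one.1 ha)
      _ = 1 - star x * x := by rw [mul_one, he.isIdempotentElem]
  rw [norm_le_one_iff_star_mul_self_le_one]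
  calc star (x + a) * (x + a) = star x * x + star a * a := by
        have hax' : star a * x = 0 := by simpa using congr(star $hxa)
        rw [star_add, add_mul, mul_add, mul_add, hxa, hax', add_zero, zero_add]
    _ ≤ star x * x + (1 - star x * x) := by gcongr
    _ = 1 := add_sub_cancel _ _

theorem isPartialIsometry_of_mem_extremePoints (hx : x ∈ (cornerBall S p q).extremePoints ℝ) :
    IsPartialIsometry x := by
  obtain ⟨hxS, hqx, hxp, hx1⟩ := hx.1
  set d := (2⁻¹ : ℝ) • (x - x * star x * x) with hd
  have hdS : d ∈ S := by
    rw [hd, ← Complex.coe_smul]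
    exact S.smul_mem (sub_mem hxS (mul_mem (mul_mem hxS (star_mem hxS)) hxS)) _
  have hqd : q * d = d := by simp only [hd, mul_smul_comm, mul_sub, ← mul_assoc, hqx]
  have hdp : d * p = d := by simp only [hd, smul_mul_assoc, sub_mul, mul_assoc, hxp]
  have hd0 : d = 0 := eq_zero_of_mem_extremePoints_of_add_mem_of_sub_mem hx
    ⟨add_mem hxS hdS, by rw [mul_add, hqx, hqd], by rw [add_mul, hxp, hdp],
      norm_add_half_smul_le_one hx1⟩
    ⟨sub_mem hxS hdS, by rw [mul_sub, hqx, hqd], by rw [sub_mul, hxp, hdp],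
      norm_sub_half_smul_le_one hx1⟩
  exact (sub_eq_zero.1 ((smul_eq_zero_iff_right (by norm_num)).1 hd0)).symm

theorem eq_zero_of_orthogonal_of_mem_extremePoints {b : A}
    (hx : x ∈ (cornerBall S p q).extremePoints ℝ) (hbS : b ∈ S) (hqb : q * b = b) (hbp : b * p = b)
    (hxb : star x * b = 0) (hbx : b * star x = 0) : b = 0 := by
  obtain ⟨hxS, hqx, hxp, -⟩ := hx.1
  have hmem (c : ℝ) (hc : ‖c • b‖ ≤ 1) : x + c • b ∈ cornerBall S p q := by
    refine ⟨add_mem hxS ?_, ?_, ?_, ?_⟩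
    · rw [← Complex.coe_smul]
      exact S.smul_mem hbS _
    · rw [mul_add, hqx, mul_smul_comm, hqb]
    · rw [add_mul, hxp, smul_mul_assoc, hbp]
    · exact norm_add_le_one_of_orthogonal (isPartialIsometry_of_mem_extremePoints hx) hc
        (by rw [mul_smul_comm, hxb, smul_zero]) (by rw [smul_mul_assoc, hbx, smul_zero])
  have hc : 0 < (‖b‖ + 1)⁻¹ := by positivity
  have hcb : ‖(‖b‖ + 1)⁻¹ • b‖ ≤ 1 := by
    rw [norm_smul, Real.norm_of_nonneg hc.le, inv_mul_le_one₀ (by positivity)]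
    exact (lt_add_one _).le
  refine (smul_eq_zero_iff_right hc.ne').1
    (eq_zero_of_mem_extremePoints_of_add_mem_of_sub_mem hx (hmem _ hcb) ?_)
  rw [sub_eq_add_neg, ← neg_smul]
  exact hmem _ (by rwa [neg_smul, norm_neg])

theorem mul_mul_eq_zero_of_mem_extremePoints (hp : IsStarProjection p) (hpS : p ∈ S)
    (hq : IsStarProjection q) (hqS : q ∈ S) (hx : x ∈ (cornerBall S p q).extremePoints ℝ)
    {y : A} (hy : y ∈ S) : (q - x * star x) * y * (p - star x * x) = 0 := by
  obtain ⟨hxS, hqx, hxp, -⟩ := hx.1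
  have hxx := isPartialIsometry_of_mem_extremePoints hx
  have hxq : star x * q = star x := by simpa [hq.isSelfAdjoint.star_eq] using congr(star $hqx)
  have hpx : p * star x = star x := by simpa [hp.isSelfAdjoint.star_eq] using congr(star $hxp)
  have hxxx : star x * x * star x = star x := by simpa [IsPartialIsometry] using hxx.star
  apply eq_zero_of_orthogonal_of_mem_extremePoints hx
  · exact mul_mem (mul_mem (sub_mem hqS (mul_mem hxS (star_mem hxS))) hy)
      (sub_mem hpS (mul_mem (star_mem hxS) hxS))
  · have : q * (q - x * star x) = q - x * star x := by
      rw [mul_sub, hq.isIdempotentElem, ← mul_assoc, hqx]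
    rw [← mul_assoc, ← mul_assoc, this]
  · have : (p - star x * x) * p = p - star x * x := by
      rw [sub_mul, hp.isIdempotentElem, mul_assoc, hxp]
    rw [mul_assoc, this]
  · have : star x * (q - x * star x) = 0 := by rw [mul_sub, hxq, ← mul_assoc, hxxx, sub_self]
    rw [← mul_assoc, ← mul_assoc, this, zero_mul, zero_mul]
  · have : (p - star x * x) * star x = 0 := by rw [sub_mul, hpx, hxxx, sub_self]
    rw [mul_assoc, this, mul_zero]

end ExtremePoints

section Unitary

theorem conj_mul_conj_of_mem_unitary {R : Type*} [Monoid R] [StarMul R] {u : R}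
    (hu : u ∈ unitary R) (x y : R) :
    star u * x * u * (star u * y * u) = star u * (x * y) * u := by
  calc star u * x * u * (star u * y * u) = star u * (x * (u * star u) * y) * u := by
        simp only [mul_assoc]
    _ = star u * (x * y) * u := by rw [Unitary.mul_star_self_of_mem hu, mul_one]

variable {A : Type*} [NormedRing A] [StarRing A] [CStarRing A] {v w : A}

theorem mul_star_eq_zero_of_star_mul_self_eq_one_sub (hv : IsPartialIsometry v)
    (hw : star w * w = 1 - star v * v) : w * star v = 0 := by
  have hv' : star v * v * star v = star v := by simpa [IsPartialIsometry] using hv.star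
  rw [← CStarRing.star_mul_self_eq_zero_iff, star_mul, star_star, mul_assoc, ← mul_assoc _ w, hw,
    sub_mul, one_mul, hv', sub_self, mul_zero]

theorem add_mem_unitary_of_star_mul_self_eq_one_sub (hv : IsPartialIsometry v)
    (hw : star w * w = 1 - star v * v) (hw' : w * star w = 1 - v * star v) : v + w ∈ unitary A := by
  have hwv : w * star v = 0 := mul_star_eq_zero_of_star_mul_self_eq_one_sub hv hw
  have hwv' : star w * v = 0 := by
    simpa using mul_star_eq_zero_of_star_mul_self_eq_one_sub hv.star (w := star w)
      (by rwa [star_star, star_star])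
  have hvw : v * star w = 0 := by simpa using congr(star $hwv)
  have hvw' : star v * w = 0 := by simpa using congr(star $hwv')
  rw [Unitary.mem_iff]
  constructor
  · rw [star_add, add_mul, mul_add, mul_add, hvw', hwv', hw, add_zero, zero_add, add_sub_cancel]
  · rw [star_add, add_mul, mul_add, mul_add, hvw, hwv, hw', add_zero, zero_add, add_sub_cancel]

end Unitary

section VonNeumannAlgebra

variable {M : VonNeumannAlgebra H} {p q : H →L[ℂ] H}

theorem IsProjIn.isStarProjection (hp : IsProjIn M p) : IsStarProjection p := ⟨hp.2.2, hp.2.1⟩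

theorem isProjIn_of_isStarProjection (hp : p ∈ M) (h : IsStarProjection p) : IsProjIn M p :=
  ⟨hp, h.isSelfAdjoint, h.isIdempotentElem⟩

theorem IsProjIn.sub (hp : IsProjIn M p) (hq : IsProjIn M q) (h : ProjLE p q) :
    IsProjIn M (q - p) :=
  isProjIn_of_isStarProjection (sub_mem hq.1 hp.1)
    (hp.isStarProjection.sub_of_mul_eq_left hq.isStarProjection h.1)

theorem IsPartialIsometry.isProjIn_star_mul_self {x : H →L[ℂ] H} (hxx : IsPartialIsometry x)
    (hx : x ∈ M) :
    IsProjIn M (star x * x) :=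
  isProjIn_of_isStarProjection (mul_mem (star_mem hx) hx) hxx.isStarProjection_star_mul_self

theorem IsPartialIsometry.isProjIn_mul_star_self {x : H →L[ℂ] H} (hxx : IsPartialIsometry x)
    (hx : x ∈ M) :
    IsProjIn M (x * star x) :=
  isProjIn_of_isStarProjection (mul_mem hx (star_mem hx)) hxx.isStarProjection_mul_star_self

theorem ProjLE.conj_unitary (h : ProjLE p q) {u : H →L[ℂ] H} (hu : u ∈ unitary (H →L[ℂ] H)) :
    ProjLE (star u * p * u) (star u * q * u) :=
  ⟨by rw [conj_mul_conj_of_mem_unitary hu, h.1], by rw [conj_mul_conj_of_mem_unitary hu, h.2]⟩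

theorem IsProjIn.conj_unitary (hp : IsProjIn M p) {u : H →L[ℂ] H} (huM : u ∈ M)
    (hu : u ∈ unitary (H →L[ℂ] H)) : IsProjIn M (star u * p * u) :=
  ⟨mul_mem (mul_mem (star_mem huM) hp.1) huM, hp.2.1.conjugate' u,
    by rw [conj_mul_conj_of_mem_unitary hu, hp.2.2]⟩

theorem IsProjIn.mvNEquiv_conj_unitary (hp : IsProjIn M p) {u : H →L[ℂ] H} (huM : u ∈ M)
    (hu : u ∈ unitary (H →L[ℂ] H)) : MvNEquiv M p (star u * p * u) := by
  refine ⟨star u * p, mul_mem (star_mem huM) hp.1, ?_, ?_⟩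
  · rw [← star_eq_adjoint, star_mul, star_star, hp.2.1.star_eq, mul_assoc, ← mul_assoc u,
      Unitary.mul_star_self_of_mem hu, one_mul, hp.2.2]
  · rw [← star_eq_adjoint, star_mul, star_star, hp.2.1.star_eq, mul_assoc, ← mul_assoc p, hp.2.2,
      mul_assoc]

theorem tendsto_projSet_iff {M : VonNeumannAlgebra H} {ι : Type*} {l : Filter ι}
    {p : ι → ProjSet M} {p₀ : ProjSet M} :
    Tendsto p l (𝓝 p₀) ↔ ∀ ξ : H, Tendsto (fun i => (p i).1 ξ) l (𝓝 (p₀.1 ξ)) := by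
  have hind : IsInducing (fun p : ProjSet M => (fun ξ => p.1 ξ : H → H)) := ⟨rfl⟩
  rw [hind.tendsto_nhds_iff, tendsto_pi_nhds]
  rfl

theorem isCentralProj_starProjection {K : Submodule ℂ H} [K.HasOrthogonalProjection]
    (hM : ∀ m ∈ M, K ∈ Module.End.invtSubmodule m)
    (hM' : ∀ m ∈ M.commutant, K ∈ Module.End.invtSubmodule m) :
    IsCentralProj M K.starProjection := by
  have hK : IsStarProjection K.starProjection := isStarProjection_starProjection
  have hmem (N : VonNeumannAlgebra H) (hN : ∀ m ∈ N.commutant, K ∈ Module.End.invtSubmodule m) :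
      K.starProjection ∈ N :=
    (VonNeumannAlgebra.IsStarProjection.mem_iff hK N).2 fun m hm => by simpa using hN m hm
  have hK' := hmem M.commutant (by simpa using hM)
  exact ⟨⟨hmem M hM', hK.isSelfAdjoint, hK.isIdempotentElem⟩, fun x hx =>
    (VonNeumannAlgebra.mem_commutant_iff.1 hK' x hx).symm⟩

theorem exists_isCentralProj_mul_eq (hp : p ∈ M) (h : ∀ y ∈ M, p * y * q = 0) :
    ∃ z, IsCentralProj M z ∧ z * q = q ∧ p * z = 0 := by
  let K : Submodule ℂ H := ⨅ y : M, (p * (y : H →L[ℂ] H)).ker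
  have hK {ξ : H} : ξ ∈ K ↔ ∀ y ∈ M, p (y ξ) = 0 := by simp [K]
  have hKclosed : IsClosed (K : Set H) := by
    simpa [K] using isClosed_iInter fun y : M => (p * (y : H →L[ℂ] H)).isClosed_ker
  have : CompleteSpace K := hKclosed.completeSpace_coe
  have hM : ∀ m ∈ M, K ∈ Module.End.invtSubmodule m := fun m hm ξ hξ =>
    hK.2 fun y hy => hK.1 hξ (y * m) (mul_mem hy hm)
  have hM' : ∀ m ∈ M.commutant, K ∈ Module.End.invtSubmodule m := fun m hm ξ hξ =>
    hK.2 fun y hy => by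
      have hcomm := congr($(VonNeumannAlgebra.mem_commutant_iff.1 hm _ (mul_mem hp hy)) ξ)
      simpa [hK.1 hξ y hy] using hcomm
  refine ⟨_, isCentralProj_starProjection hM hM', ?_, ?_⟩
  · ext ξ
    exact Submodule.starProjection_eq_self_iff.2 (hK.2 fun y hy => congr($(h y hy) ξ))
  · ext ξ
    exact hK.1 (Submodule.starProjection_apply_mem K ξ) 1 (one_mem M)

theorem isClosed_setOf_toCLM_mem (M : VonNeumannAlgebra H) :
    IsClosed {A : H →WOT[ℂ] H | A.toCLM ∈ M} := by
  have hset : {A : H →WOT[ℂ] H | A.toCLM ∈ M} =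
      ⋂ m : M.commutant, {A | .ofCLM m * A = A * .ofCLM (m : H →L[ℂ] H)} := by
    ext A
    have hA := VonNeumannAlgebra.mem_commutant_iff (S := M.commutant) (z := A.toCLM)
    rw [M.commutant_commutant] at hA
    simp [hA, -VonNeumannAlgebra.mem_commutant_iff, ← ContinuousLinearMapWOT.toCLM_injective.eq_iff]
  rw [hset]
  exact isClosed_iInter fun m =>
    isClosed_eq (continuous_const_mul _) (continuous_mul_const _)

theorem extremePoints_cornerBall_nonempty (M : VonNeumannAlgebra H) (p q : H →L[ℂ] H) :
    ((cornerBall M.toStarSubalgebra p q).extremePoints ℝ).Nonempty := by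
  let e := ContinuousLinearMapWOT.linearEquiv (σ := RingHom.id ℂ) (E := H) (F := H) ℝ
  have hset : e ⁻¹' cornerBall M.toStarSubalgebra p q =
      {A | ‖A.toCLM‖ ≤ 1} ∩ ({A | A.toCLM ∈ M} ∩
        ({A | .ofCLM q * A = A} ∩ {A | A * .ofCLM p = A})) := by
    ext A
    simp only [cornerBall, Set.mem_preimage, Set.mem_ofPred_eq, Set.mem_inter_iff,
      ← ContinuousLinearMapWOT.toCLM_injective.eq_iff]
    tauto
  have hcompact : IsCompact (e ⁻¹' cornerBall M.toStarSubalgebra p q) := by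
    rw [hset]
    exact (isCompact_setOf_norm_toCLM_le 1).inter_right <| (isClosed_setOf_toCLM_mem M).inter <|
      (isClosed_eq (continuous_const_mul _) continuous_id).inter
        (isClosed_eq (continuous_mul_const _) continuous_id)
  obtain ⟨A, hA⟩ := hcompact.extremePoints_nonempty ⟨0, by simp [cornerBall, zero_mem]⟩
  rw [← Set.image_preimage_eq (cornerBall M.toStarSubalgebra p q) e.surjective,
    ← image_extremePoints]
  exact ⟨e A, A, hA, rfl⟩

theorem exists_partialIsometry_comparison (hp : IsProjIn M p) (hq : IsProjIn M q) :
    ∃ x ∈ M, IsPartialIsometry x ∧ ProjLE (star x * x) p ∧ ProjLE (x * star x) q ∧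
      ∃ z, IsCentralProj M z ∧ z * (p - star x * x) = p - star x * x ∧
        z * (q - x * star x) = 0 := by
  obtain ⟨x, hx⟩ := extremePoints_cornerBall_nonempty M p q
  obtain ⟨hxM, hqx, hxp, -⟩ := hx.1
  have hpx : p * star x = star x := by simpa [hp.2.1.star_eq] using congr(star $hxp)
  have hxq : star x * q = star x := by simpa [hq.2.1.star_eq] using congr(star $hqx)
  have hqxM : q - x * star x ∈ M := sub_mem hq.1 (mul_mem hxM (star_mem hxM))
  obtain ⟨z, hz, hzp, hqz⟩ := exists_isCentralProj_mul_eq hqxM fun y hy =>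
    mul_mul_eq_zero_of_mem_extremePoints hp.isStarProjection hp.1 hq.isStarProjection hq.1 hx hy
  exact ⟨x, hxM, isPartialIsometry_of_mem_extremePoints hx,
    ⟨by rw [mul_assoc, hxp], by rw [← mul_assoc, hpx]⟩,
    ⟨by rw [mul_assoc, hxq], by rw [← mul_assoc, hqx]⟩, z, hz, hzp, (hz.2 _ hqxM).trans hqz⟩

end VonNeumannAlgebra

/-- A faithful operator-valued trace on `M` which is modular over the central projections and
strong-strong continuous on bounded sets. The values are arbitrary operators on `H`, and only the
values on `M` matter. -/
structure IsFaithfulNormalTrace (M : VonNeumannAlgebra H) (T : (H →L[ℂ] H) → H →L[ℂ] H) :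
    Prop where
  map_add : ∀ x y, x ∈ M → y ∈ M → T (x + y) = T x + T y
  map_smul : ∀ (c : ℂ) (x : H →L[ℂ] H), x ∈ M → T (c • x) = c • T x
  map_mul_comm : ∀ x ∈ M, ∀ y ∈ M, T (x * y) = T (y * x)
  eq_zero_of_map_eq_zero : ∀ x, x ∈ M → x.IsPositive → T x = 0 → x = 0
  map_central_mul : ∀ z x, x ∈ M → IsCentralProj M z → T (z * x) = z * T x
  tendsto_map : ∀ (ι : Type u) (l : Filter ι) (x : ι → H →L[ℂ] H) (x' : H →L[ℂ] H) (C : ℝ),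
    (∀ α, x α ∈ M ∧ ‖x α‖ ≤ C) → x' ∈ M →
    (∀ ξ : H, Tendsto (fun α => x α ξ) l (𝓝 (x' ξ))) →
    ∀ ξ : H, Tendsto (fun α => T (x α) ξ) l (𝓝 (T x' ξ))

namespace IsFaithfulNormalTrace

variable {M : VonNeumannAlgebra H} {T : (H →L[ℂ] H) → H →L[ℂ] H} {p q : H →L[ℂ] H}

section Algebra

theorem map_sub (hT : IsFaithfulNormalTrace M T) {x y : H →L[ℂ] H} (hx : x ∈ M) (hy : y ∈ M) :
    T (x - y) = T x - T y := by
  rw [eq_sub_iff_add_eq, ← hT.map_add _ _ (sub_mem hx hy) hy, sub_add_cancel]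

theorem map_eq_of_mvNEquiv (hT : IsFaithfulNormalTrace M T) (h : MvNEquiv M p q) : T p = T q := by
  obtain ⟨v, hv, rfl, rfl⟩ := h
  exact hT.map_mul_comm _ (star_mem hv) _ hv

theorem map_add_eq_of_central_mul (hT : IsFaithfulNormalTrace M T) {z d d' : H →L[ℂ] H}
    (hz : IsCentralProj M z) (hd : d ∈ M) (hd' : d' ∈ M) (hzd : z * d = d) (hzd' : z * d' = 0) :
    T (d + d') = (2 * z - 1) * (T d - T d') := by
  have hTd : z * T d = T d := by rw [← hT.map_central_mul z d hd hz, hzd]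
  have hTd' : z * T d' = 0 := by
    rw [← hT.map_central_mul z d' hd' hz, hzd']
    simpa using hT.map_smul 0 0 (zero_mem M)
  rw [hT.map_add d d' hd hd', sub_mul, mul_assoc, mul_sub, hTd, hTd', one_mul, sub_zero, two_mul]
  abel

theorem mvNEquiv_of_map_eq (hT : IsFaithfulNormalTrace M T) (hp : IsProjIn M p)
    (hq : IsProjIn M q) (h : T p = T q) : MvNEquiv M p q := by
  obtain ⟨x, hx, hxx, hep, hfq, z, hz, hzp, hzq⟩ := exists_partialIsometry_comparison hp hq
  have he := hxx.isProjIn_star_mul_self hx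
  have hf := hxx.isProjIn_mul_star_self hx
  have hd := he.sub hp hep
  have hd' := hf.sub hq hfq
  have hTd : T (p - star x * x) = T (q - x * star x) := by
    rw [hT.map_sub hp.1 he.1, hT.map_sub hq.1 hf.1, h, hT.map_mul_comm _ (star_mem hx) _ hx]
  have hT0 : T ((p - star x * x) + (q - x * star x)) = 0 := by
    rw [hT.map_add_eq_of_central_mul hz hd.1 hd'.1 hzp hzq, hTd, sub_self, mul_zero]
  have hsum : (p - star x * x) + (q - x * star x) = 0 :=
    hT.eq_zero_of_map_eq_zero _ (add_mem hd.1 hd'.1)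
      ((IsPositive.of_isStarProjection hd.isStarProjection).add
        (.of_isStarProjection hd'.isStarProjection)) hT0
  obtain ⟨hd0, hd'0⟩ := (add_eq_zero_iff_of_nonneg hd.isStarProjection.nonneg
    hd'.isStarProjection.nonneg).1 hsum
  exact ⟨x, hx, (sub_eq_zero.1 hd0).symm, (sub_eq_zero.1 hd'0).symm⟩

theorem exists_unitary_mul_eq (hT : IsFaithfulNormalTrace M T) {v : H →L[ℂ] H} (hv : v ∈ M)
    (hvv : IsPartialIsometry v) : ∃ u ∈ M, u ∈ unitary (H →L[ℂ] H) ∧ u * (star v * v) = v := by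
  have he := hvv.isProjIn_star_mul_self hv
  have hf := hvv.isProjIn_mul_star_self hv
  have he' := isProjIn_of_isStarProjection (sub_mem (one_mem M) he.1) he.isStarProjection.one_sub
  have hf' := isProjIn_of_isStarProjection (sub_mem (one_mem M) hf.1) hf.isStarProjection.one_sub
  obtain ⟨w, hw, hwe, hwf⟩ := hT.mvNEquiv_of_map_eq he' hf' <| by
    rw [hT.map_sub (one_mem M) he.1, hT.map_sub (one_mem M) hf.1,
      hT.map_mul_comm _ (star_mem hv) _ hv]
  refine ⟨v + w, add_mem hv hw, add_mem_unitary_of_star_mul_self_eq_one_sub hvv hwe hwf, ?_⟩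
  rw [add_mul, ← mul_assoc, hvv, ← mul_assoc w,
    mul_star_eq_zero_of_star_mul_self_eq_one_sub hvv hwe, zero_mul, add_zero]

theorem exists_mvNEquiv_projLE (hT : IsFaithfulNormalTrace M T) (hp : IsProjIn M p)
    (hq : IsProjIn M q) :
    ∃ r, IsProjIn M r ∧ MvNEquiv M q r ∧ ∃ e, IsProjIn M e ∧ ProjLE e p ∧ ProjLE e r ∧
      ∃ z, IsCentralProj M z ∧ z * (p - e) = p - e ∧ z * (r - e) = 0 := by
  obtain ⟨x, hx, hxx, hep, hfq, z, hz, hzp, hzq⟩ := exists_partialIsometry_comparison hp hq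
  obtain ⟨u, huM, hu, hux⟩ := hT.exists_unitary_mul_eq hx hxx
  set e := star x * x
  have he : IsProjIn M e := hxx.isProjIn_star_mul_self hx
  have huu : star u * u = 1 := Unitary.star_mul_self_of_mem hu
  have hconj : star u * (x * star x) * u = e := by
    have hux' : star u * x = e := by rw [← hux, ← mul_assoc, huu, one_mul]
    have hxu : star x * u = e := by simpa [he.2.1.star_eq] using congr(star $hux')
    rw [← mul_assoc, hux', mul_assoc, hxu, he.2.2]
  have hsub : star u * q * u - e = star u * (q - x * star x) * u := by
    rw [mul_sub, sub_mul, hconj]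
  have her : ProjLE e (star u * q * u) := by
    simpa only [hconj] using hfq.conj_unitary hu
  refine ⟨star u * q * u, hq.conj_unitary huM hu, hq.mvNEquiv_conj_unitary huM hu, e, he, hep,
    her, z, hz, hzp, ?_⟩
  rw [hsub, ← mul_assoc, ← mul_assoc, hz.2 _ (star_mem huM), mul_assoc (star u), hzq, mul_zero,
    zero_mul]

theorem exists_mvNEquiv_map_sub_sq (hT : IsFaithfulNormalTrace M T) (hp : IsProjIn M p)
    (hq : IsProjIn M q) :
    ∃ r, IsProjIn M r ∧ MvNEquiv M q r ∧ IsProjIn M ((r - p) * (r - p)) ∧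
      ∃ z, IsCentralProj M z ∧ T ((r - p) * (r - p)) = (2 * z - 1) * (T p - T q) := by
  obtain ⟨r, hr, hqr, e, he, hep, her, z, hz, hzp, hzr⟩ := hT.exists_mvNEquiv_projLE hp hq
  have hd := he.sub hp hep
  have hd' := he.sub hr her
  have hdd' : (p - e) * (r - e) = 0 := by
    rw [← hzp, hz.2 _ hd.1, mul_assoc, hzr, mul_zero]
  have hd'd : (r - e) * (p - e) = 0 := by
    simpa [hd.2.1.star_eq, hd'.2.1.star_eq] using congr(star $hdd')
  have hsq : (r - p) * (r - p) = (p - e) + (r - e) := by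
    rw [← sub_sub_sub_cancel_right r p e, sub_mul (r - e), mul_sub (r - e), mul_sub (p - e), hdd',
      hd'd, hd.2.2, hd'.2.2]
    abel
  refine ⟨r, hr, hqr, ?_, z, hz, ?_⟩
  · rw [hsq]
    exact isProjIn_of_isStarProjection (add_mem hd.1 hd'.1)
      (hd.isStarProjection.add hd'.isStarProjection hdd')
  · rw [hsq, hT.map_add_eq_of_central_mul hz hd.1 hd'.1 hzp hzr, hT.map_sub hp.1 he.1,
      hT.map_sub hr.1 he.1, sub_sub_sub_cancel_right, hT.map_eq_of_mvNEquiv hqr]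

end Algebra

section Continuity

theorem map_real_smul (hT : IsFaithfulNormalTrace M T) (c : ℝ) {x : H →L[ℂ] H} (hx : x ∈ M) :
    T (c • x) = c • T x := by
  simpa only [Complex.coe_smul] using hT.map_smul c x hx

theorem convex_setOf_map_apply_mem_closedBall (hT : IsFaithfulNormalTrace M T) (R : ℝ) (ξ η : H)
    (ε : ℝ) : Convex ℝ {y : H →L[ℂ] H | y ∈ M ∧ ‖y‖ ≤ R ∧ T y ξ ∈ Metric.closedBall η ε} := by
  rintro y ⟨hyM, hyR, hy⟩ y' ⟨hyM', hyR', hy'⟩ s t hs ht hst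
  have hmem (c : ℝ) {x : H →L[ℂ] H} (hx : x ∈ M) : c • x ∈ M := by
    rw [← Complex.coe_smul]
    exact M.toStarSubalgebra.smul_mem hx c
  refine ⟨add_mem (hmem s hyM) (hmem t hyM'), ?_, ?_⟩
  · rw [← mem_closedBall_zero_iff] at hyR hyR' ⊢
    exact convex_closedBall _ _ hyR hyR' hs ht hst
  · rw [hT.map_add _ _ (hmem s hyM) (hmem t hyM'), hT.map_real_smul s hyM, hT.map_real_smul t hyM']
    exact convex_closedBall _ _ hy hy' hs ht hst

theorem map_eq_of_tendsto_wot (hT : IsFaithfulNormalTrace M T) {ι : Type*} {l : Filter ι}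
    [l.NeBot] {x : ι → H →L[ℂ] H} {a b : H →L[ℂ] H} {R : ℝ} (hxM : ∀ i, x i ∈ M)
    (hxR : ∀ i, ‖x i‖ ≤ R) (ha : a ∈ M)
    (hx : Tendsto (fun i => ContinuousLinearMapWOT.ofCLM (x i)) l (𝓝 (.ofCLM a)))
    (hb : ∀ ξ, Tendsto (fun i => T (x i) ξ) l (𝓝 (b ξ))) : T a = b := by
  ext ξ
  refine eq_of_forall_dist_le fun ε hε => ?_
  let C : Set (H →L[ℂ] H) := {y | y ∈ M ∧ ‖y‖ ≤ R ∧ T y ξ ∈ Metric.closedBall (b ξ) ε}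
  have haC : ContinuousLinearMapWOT.ofCLM a ∈ closure (ContinuousLinearMapWOT.ofCLM '' C) := by
    refine mem_closure_of_tendsto hx ?_
    filter_upwards [(hb ξ).eventually (Metric.closedBall_mem_nhds _ hε)] with i hi
    exact ⟨x i, ⟨hxM i, hxR i, hi⟩, rfl⟩
  have hclosure :=
    coe_mem_closure_of_convex (hT.convex_setOf_map_apply_mem_closedBall R ξ (b ξ) ε) haC
  rw [Set.image_eq_range] at hclosure
  let g : Filter C := comap (fun y => ⇑(y : H →L[ℂ] H)) (𝓝 a)
  have : g.NeBot := comap_neBot_iff_frequently.2 (mem_closure_iff_frequently.1 hclosure)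
  have hlim : Tendsto (fun y : C => T y ξ) g (𝓝 (T a ξ)) :=
    hT.tendsto_map C g (fun y => y) a R (fun y => ⟨y.2.1, y.2.2.1⟩) ha
      (tendsto_pi_nhds.1 tendsto_comap) ξ
  exact Metric.isClosed_closedBall.mem_of_tendsto hlim (.of_forall fun y => y.2.2.2)

theorem tendsto_inner_zero_of_tendsto_map_zero (hT : IsFaithfulNormalTrace M T) {ι : Type*}
    {l : Filter ι} {x : ι → H →L[ℂ] H} {R : ℝ} (hxM : ∀ i, x i ∈ M) (hxR : ∀ i, ‖x i‖ ≤ R)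
    (hx : ∀ i, (x i).IsPositive) (h : ∀ ξ, Tendsto (fun i => T (x i) ξ) l (𝓝 0)) (ξ η : H) :
    Tendsto (fun i => inner ℂ η (x i ξ)) l (𝓝 0) := by
  refine (tendsto_iff_ultrafilter _ _ _).2 fun g hg => ?_
  obtain ⟨A, -, hA⟩ := (isCompact_setOf_norm_toCLM_le R).ultrafilter_le_nhds
    (g.map fun i => (.ofCLM (x i) : H →WOT[ℂ] H)) (by simp [hxR])
  have hlim : Tendsto (fun i => ContinuousLinearMapWOT.ofCLM (x i)) g (𝓝 A) := hA
  have hAM : A.toCLM ∈ M :=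
    (isClosed_setOf_toCLM_mem M).mem_of_tendsto hlim (.of_forall hxM)
  have hApos : A.toCLM.IsPositive :=
    isClosed_setOf_toCLM_isPositive.mem_of_tendsto hlim (.of_forall hx)
  have hTA : T A.toCLM = 0 :=
    hT.map_eq_of_tendsto_wot hxM hxR hAM hlim fun ξ => (h ξ).mono_left hg
  have hA0 : A = 0 := congr(ContinuousLinearMapWOT.ofCLM
    $(hT.eq_zero_of_map_eq_zero _ hAM hApos hTA))
  simpa [hA0] using ContinuousLinearMapWOT.tendsto_iff_forall_inner_apply_tendsto.1 hlim ξ η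

end Continuity

section Quotient

theorem tendsto_pquotMk_of_tendsto_map (hT : IsFaithfulNormalTrace M T) {ι : Type*} {l : Filter ι}
    {p : ι → ProjSet M} {p₀ : ProjSet M}
    (h : ∀ ξ, Tendsto (fun i => T (p i).1 ξ) l (𝓝 (T p₀.1 ξ))) :
    Tendsto (fun i => pquotMk M (p i)) l (𝓝 (pquotMk M p₀)) := by
  choose r hr hpr hs z hz hTs using fun i => hT.exists_mvNEquiv_map_sub_sq p₀.2 (p i).2
  have hzT (i : ι) (ξ : H) :
      ‖T ((r i - p₀.1) * (r i - p₀.1)) ξ‖ ≤ ‖T p₀.1 ξ - T (p i).1 ξ‖ := by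
    have hu := (hz i).1.isStarProjection.two_mul_sub_one_mem_unitary
    rw [hTs]
    exact (norm_map_of_mem_unitary hu _).le
  have hT0 (ξ : H) : Tendsto (fun i => T ((r i - p₀.1) * (r i - p₀.1)) ξ) l (𝓝 0) := by
    refine squeeze_zero_norm (hzT · ξ) ?_
    simpa using ((h ξ).const_sub (T p₀.1 ξ)).norm
  have hr0 (ξ : H) : Tendsto (fun i => r i ξ) l (𝓝 (p₀.1 ξ)) := by
    have hinner := hT.tendsto_inner_zero_of_tendsto_map_zero (fun i => (hs i).1)
      (fun i => (hs i).isStarProjection.norm_le)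
      (fun i => .of_isStarProjection (hs i).isStarProjection) hT0 ξ ξ
    have hstar (i : ι) : star (r i - p₀.1) = r i - p₀.1 := ((hr i).2.1.sub p₀.2.2.1).star_eq
    have hsub : Tendsto (fun i => (r i - p₀.1) ξ) l (𝓝 0) :=
      tendsto_apply_zero_of_inner_star_mul_self (by simpa only [hstar] using hinner)
    simpa using hsub.add_const (p₀.1 ξ)
  have hmk (i : ι) : pquotMk M (p i) = pquotMk M ⟨r i, hr i⟩ := Quot.sound (hpr i)
  simp only [hmk]
  exact (continuous_quot_mk.tendsto p₀).comp (tendsto_projSet_iff.2 hr0)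

/-- The map on `P(M)/∼` induced by a trace `T`. -/
def quotMap (hT : IsFaithfulNormalTrace M T) : PQuot M → H →L[ℂ] H :=
  Quot.lift (fun p => T p.1) fun _ _ => hT.map_eq_of_mvNEquiv

theorem quotMap_injective (hT : IsFaithfulNormalTrace M T) : Function.Injective hT.quotMap := by
  rintro ⟨p⟩ ⟨q⟩ h
  exact Quot.sound (hT.mvNEquiv_of_map_eq p.2 q.2 h)

theorem continuous_quotMap (hT : IsFaithfulNormalTrace M T) :
    Continuous fun a : PQuot M => ⇑(hT.quotMap a) := by
  refine continuous_coinduced_dom.2 (continuous_iff_continuousAt.2 fun p => tendsto_pi_nhds.2 ?_)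
  exact hT.tendsto_map (ProjSet M) (𝓝 p) (fun q => q.1) p.1 1
    (fun q => ⟨q.2.1, q.2.isStarProjection.norm_le⟩) p.2.1 (tendsto_projSet_iff.1 tendsto_id)

theorem isInducing_quotMap (hT : IsFaithfulNormalTrace M T) :
    IsInducing fun a : PQuot M => ⇑(hT.quotMap a) := by
  refine isInducing_iff_nhds.2 fun a => (hT.continuous_quotMap.tendsto a).le_comap.antisymm ?_
  obtain ⟨p, rfl⟩ := Quot.exists_rep a
  have hout (b : PQuot M) : hT.quotMap b = T (Quot.out b).1 := congr(hT.quotMap $(b.out_eq)).symm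
  have hlim := hT.tendsto_pquotMk_of_tendsto_map (p := Quot.out) (p₀ := p)
    (l := comap (fun a : PQuot M => ⇑(hT.quotMap a)) (𝓝 (T p.1))) (tendsto_pi_nhds.1 ?_)
  · exact tendsto_id'.1 (hlim.congr fun b => b.out_eq)
  · simpa only [hout] using tendsto_comap (f := fun a : PQuot M => ⇑(hT.quotMap a)) (x := 𝓝 (T p.1))

end Quotient

end IsFaithfulNormalTrace

theorem centerTrace_embedding_general (M : VonNeumannAlgebra H)
    (T : (H →L[ℂ] H) → H →L[ℂ] H) (hT : IsFaithfulNormalTrace M T) :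
    (∀ (ι : Type u) (l : Filter ι) (pα : ι → ProjSet M) (p : ProjSet M),
      (∀ ξ : H, Filter.Tendsto (fun α => T (pα α).1 ξ) l (nhds (T p.1 ξ))) →
      Filter.Tendsto (fun α => pquotMk M (pα α)) l (nhds (pquotMk M p))) ∧
    (∀ (ι : Type u) (l : Filter ι) (pα : ι → ProjSet M) (p : ProjSet M),
      Filter.Tendsto (fun α => pquotMk M (pα α)) l (nhds (pquotMk M p)) →
      ∀ ξ : H, Filter.Tendsto (fun α => T (pα α).1 ξ) l (nhds (T p.1 ξ))) ∧
    (∃ D : PQuot M → H →L[ℂ] H,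
      (∀ p : ProjSet M, D (pquotMk M p) = T p.1) ∧
      Function.Injective D ∧
      ∀ s : Set (PQuot M), IsOpen s ↔
        ∃ t : Set (H →L[ℂ] H), (SOT (H := H)).IsOpen t ∧ D ⁻¹' t = s) := by
  refine ⟨fun _ _ _ _ => hT.tendsto_pquotMk_of_tendsto_map, fun _ _ _ p h => ?_, hT.quotMap,
    fun _ => rfl, hT.quotMap_injective, fun s => ?_⟩
  · exact tendsto_pi_nhds.1 ((hT.continuous_quotMap.tendsto (pquotMk M p)).comp h)
  · rw [hT.isInducing_quotMap.isOpen_iff]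
    constructor
    · rintro ⟨t, ht, rfl⟩
      exact ⟨_, ⟨t, ht, rfl⟩, rfl⟩
    · rintro ⟨_, ⟨t, ht, rfl⟩, rfl⟩
      exact ⟨t, ht, rfl⟩

/-- Let `M` be finite with center-valued trace `T`.  For nets of
projections, `T p_α → T p` strongly iff `[p_α] → [p]` in the quotient operator topology;
hence `T` induces a homeomorphism (an injective inducing map) of `(P(M)/∼, QOT)` onto a
subspace of the positive unit ball of the center with the strong topology. -/
theorem centerTrace_embedding (M : VonNeumannAlgebra H)
    (hfin : FiniteProj M (1 : H →L[ℂ] H))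
    (T : (H →L[ℂ] H) → H →L[ℂ] H)
    (hmem : ∀ x ∈ M, T x ∈ M ∧ ∀ y ∈ M, T x * y = y * T x)
    (hadd : ∀ x y, x ∈ M → y ∈ M → T (x + y) = T x + T y)
    (hsmul : ∀ (c : ℂ) (x : H →L[ℂ] H), x ∈ M → T (c • x) = c • T x)
    (hone : T 1 = 1)
    (htr : ∀ x ∈ M, ∀ y ∈ M, T (x * y) = T (y * x))
    (hpos : ∀ x, x ∈ M → x.IsPositive → (T x).IsPositive)
    (hfaithful : ∀ x, x ∈ M → x.IsPositive → T x = 0 → x = 0)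
    (hmod : ∀ z x, x ∈ M → IsCentralProj M z → T (z * x) = z * T x)
    (hcont : ∀ (ι : Type u) (l : Filter ι) (x : ι → H →L[ℂ] H) (x' : H →L[ℂ] H) (C : ℝ),
      (∀ α, x α ∈ M ∧ ‖x α‖ ≤ C) → x' ∈ M →
      (∀ ξ : H, Filter.Tendsto (fun α => x α ξ) l (nhds (x' ξ))) →
      ∀ ξ : H, Filter.Tendsto (fun α => T (x α) ξ) l (nhds (T x' ξ))) :
    (∀ (ι : Type u) (l : Filter ι) (pα : ι → ProjSet M) (p : ProjSet M),
      (∀ ξ : H, Filter.Tendsto (fun α => T (pα α).1 ξ) l (nhds (T p.1 ξ))) →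
      Filter.Tendsto (fun α => pquotMk M (pα α)) l (nhds (pquotMk M p))) ∧
    (∀ (ι : Type u) (l : Filter ι) (pα : ι → ProjSet M) (p : ProjSet M),
      Filter.Tendsto (fun α => pquotMk M (pα α)) l (nhds (pquotMk M p)) →
      ∀ ξ : H, Filter.Tendsto (fun α => T (pα α).1 ξ) l (nhds (T p.1 ξ))) ∧
    (∃ D : PQuot M → H →L[ℂ] H,
      (∀ p : ProjSet M, D (pquotMk M p) = T p.1) ∧
      Function.Injective D ∧
      ∀ s : Set (PQuot M), IsOpen s ↔
        ∃ t : Set (H →L[ℂ] H), (SOT (H := H)).IsOpen t ∧ D ⁻¹' t = s) :=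
  centerTrace_embedding_general M T ⟨hadd, hsmul, htr, hfaithful, hmod, hcont⟩
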